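/- arXiv:2002.05119 — 2 statements merged into one kernel-verified Lean document; each statement's English description precedes it below -/
import Mathlib

section
/- In the Table-1 instance, the partial allocation X with X_1 = {g_2, g_3, g_4}, X_2 = {g_1, g_5}, X_3 = {g_6} (the good g_7 is unallocated) is EFX, and there is no complete EFX allocation X' = (X'_1, X'_2, X'_3) with v_1(X'_1) ≥ 16, v_2(X'_2) ≥ 15 and v_3(X'_3) ≥ 10; in particular, no complete EFX allocation Pareto dominates X. -/
open Finset

/-- Additive value of a bundle `S` under per-good valuation `v`. -/
noncomputable def val {G : Type*} (v : G → ℝ) (S : Finset G) : ℝ := ∑ g ∈ S, v g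

/-- `X` is EFX: no agent `i` strongly envies agent `j`, i.e. for every good `g`
in `X j`, `v_i(X_i) ≥ v_i(X_j \ {g})`. -/
def EFX {G : Type*} [DecidableEq G] (v : Fin 3 → G → ℝ) (X : Fin 3 → Finset G) : Prop :=
  ∀ i j : Fin 3, ∀ g ∈ X j, val (v i) (X j \ {g}) ≤ val (v i) (X i)

/-- The valuations of the Table-1 instance: agent `i`'s value for good `g_{k+1}` is
`vT i k`. -/
noncomputable def vT : Fin 3 → Fin 7 → ℝ :=
  ![![8, 2, 12, 2, 0, 17, 1],
    ![5, 0, 9, 4, 10, 0, 3],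
    ![0, 0, 0, 0, 9, 10, 2]]

/-- The partial allocation `X₁ = {g₂,g₃,g₄}`, `X₂ = {g₁,g₅}`, `X₃ = {g₆}` (goods are
`0`-indexed: good `g_{k+1}` is `k : Fin 7`). -/
def XT : Fin 3 → Finset (Fin 7) :=
  ![{1, 2, 3}, {0, 4}, {5}]

/-! Number goods and agents from `0`. Agent `2` reaches value `10` only with good `5`, or with both
`4` and `6`. Either way most goods are forced onto their owners, because a bundle that avoids some
goods and reaches its target must contain every further good whose loss would put the target out of
reach. In every branch some agent then strongly envies another. Completeness enters only through
good `6`, which causes strong envy wherever it is placed when all other goods are as in `XT`. -/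

section AdditiveValuations

variable {G : Type*} {v : G → ℝ} {S T : Finset G}

lemma val_mono (hv : 0 ≤ v) (hST : S ⊆ T) : val v S ≤ val v T :=
  sum_le_sum_of_subset_of_nonneg hST fun g _ _ ↦ hv g

variable [Fintype G] [DecidableEq G]

lemma val_eq_sum_ite_mem (v : G → ℝ) (S : Finset G) :
    val v S = ∑ g, if g ∈ S then v g else 0 := by
  simp only [_root_.val, sum_ite_mem, univ_inter]

lemma val_le_val_compl_of_disjoint (hv : 0 ≤ v) (hST : Disjoint S T) : val v S ≤ val v Tᶜ :=
  val_mono hv (subset_compl_iff_disjoint_right.2 hST)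

lemma mem_of_val_compl_insert_lt {g : G} {c : ℝ} (hv : 0 ≤ v) (hST : Disjoint S T)
    (hS : c ≤ val v S) (hT : val v (insert g T)ᶜ < c) : g ∈ S := by
  by_contra hg
  have hSg : Disjoint S (insert g T) := disjoint_insert_right.2 ⟨hg, hST⟩
  exact (hS.trans (val_le_val_compl_of_disjoint hv hSg)).not_gt hT

end AdditiveValuations

lemma disjoint_of_subset_union {ι G : Type*} [DecidableEq G] {X : ι → Finset G} {T : Finset G}
    {i j k : ι} (hX : Pairwise (Function.onFun Disjoint X)) (hij : i ≠ j) (hik : i ≠ k)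
    (hT : T ⊆ X j ∪ X k) : Disjoint (X i) T :=
  (disjoint_union_right.2 ⟨hX hij, hX hik⟩).mono_right hT

lemma exists_mem_of_union_eq_univ {G : Type*} [Fintype G] [DecidableEq G] {X : Fin 3 → Finset G}
    (hX : X 0 ∪ X 1 ∪ X 2 = univ) (g : G) : ∃ i, g ∈ X i := by
  have hg : g ∈ X 0 ∪ X 1 ∪ X 2 := hX ▸ mem_univ g
  simp only [mem_union] at hg
  obtain (hg | hg) | hg := hg
  all_goals exact ⟨_, hg⟩

section EFX

variable {G : Type*} [DecidableEq G] {v : Fin 3 → G → ℝ} {X : Fin 3 → Finset G} {S T : Finset G}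
  {g : G} {i j : Fin 3}

lemma EFX.val_le_of_insert_subset (hX : EFX v X) (hv : 0 ≤ v i) (hg : g ∉ S)
    (hS : insert g S ⊆ X j) : val (v i) S ≤ val (v i) (X i) := by
  obtain ⟨hgX, hSX⟩ := insert_subset_iff.1 hS
  have hSg : S ⊆ X j \ {g} := subset_sdiff.2 ⟨hSX, disjoint_singleton_right.2 hg⟩
  exact (val_mono hv hSg).trans (hX i j g hgX)

lemma not_efx_of_val_compl_lt [Fintype G] (hv : 0 ≤ v i) (hg : g ∉ S) (hS : insert g S ⊆ X j)
    (hT : Disjoint (X i) T) (hlt : val (v i) Tᶜ < val (v i) S) : ¬ EFX v X := fun hX ↦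
  ((hX.val_le_of_insert_subset hv hg hS).trans (val_le_val_compl_of_disjoint hv hT)).not_gt hlt

end EFX

namespace Table1

lemma vT_nonneg (i : Fin 3) : 0 ≤ vT i := by
  intro g
  fin_cases i <;> fin_cases g <;> norm_num [vT]

lemma val_vT_zero (S : Finset (Fin 7)) :
    val (vT 0) S = (if 0 ∈ S then 8 else 0) + (if 1 ∈ S then 2 else 0) +
      (if 2 ∈ S then 12 else 0) + (if 3 ∈ S then 2 else 0) + (if 5 ∈ S then 17 else 0) +
      (if 6 ∈ S then 1 else 0) := by
  rw [val_eq_sum_ite_mem, Fin.sum_univ_seven]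
  simp [vT]

lemma val_vT_one (S : Finset (Fin 7)) :
    val (vT 1) S = (if 0 ∈ S then 5 else 0) + (if 2 ∈ S then 9 else 0) +
      (if 3 ∈ S then 4 else 0) + (if 4 ∈ S then 10 else 0) + (if 6 ∈ S then 3 else 0) := by
  rw [val_eq_sum_ite_mem, Fin.sum_univ_seven]
  simp [vT]

lemma val_vT_two (S : Finset (Fin 7)) :
    val (vT 2) S =
      (if 4 ∈ S then 9 else 0) + (if 5 ∈ S then 10 else 0) + (if 6 ∈ S then 2 else 0) := by
  rw [val_eq_sum_ite_mem, Fin.sum_univ_seven]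
  simp [vT]

lemma efx_XT : EFX vT XT := by
  intro i j g hg
  obtain rfl | rfl | rfl : i = 0 ∨ i = 1 ∨ i = 2 := by omega
  all_goals
    fin_cases j <;> fin_cases hg <;>
      norm_num +decide [val_vT_zero, val_vT_one, val_vT_two, XT]

variable {X : Fin 3 → Finset (Fin 7)}

lemma forall_val_XT_le_iff :
    (∀ i, val (vT i) (XT i) ≤ val (vT i) (X i)) ↔
      16 ≤ val (vT 0) (X 0) ∧ 15 ≤ val (vT 1) (X 1) ∧ 10 ≤ val (vT 2) (X 2) := by
  have h0 : val (vT 0) (XT 0) = 16 := by norm_num +decide [val_vT_zero, XT]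
  have h1 : val (vT 1) (XT 1) = 15 := by norm_num +decide [val_vT_one, XT]
  have h2 : val (vT 2) (XT 2) = 10 := by norm_num +decide [val_vT_two, XT]
  rw [Fin.forall_fin_succ, Fin.forall_fin_two]
  simp [h0, h1, h2]

variable (hX : Pairwise (Function.onFun Disjoint X))
include hX

lemma not_efx_vT_of_five_notMem (h1 : 15 ≤ val (vT 1) (X 1)) (h2 : 10 ≤ val (vT 2) (X 2))
    (h5X : 5 ∉ X 2) : ¬ EFX vT X := by
  have hX2 : Disjoint (X 2) {5} := disjoint_singleton_right.2 h5X
  have h4X : 4 ∈ X 2 :=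
    mem_of_val_compl_insert_lt (vT_nonneg 2) hX2 h2 (by norm_num +decide [val_vT_two])
  have h6X : 6 ∈ X 2 :=
    mem_of_val_compl_insert_lt (vT_nonneg 2) hX2 h2 (by norm_num +decide [val_vT_two])
  have hX1 : Disjoint (X 1) {4, 6} :=
    (hX (by decide)).mono_right (by simp [insert_subset_iff, h4X, h6X] : {4, 6} ⊆ X 2)
  have h0X : 0 ∈ X 1 :=
    mem_of_val_compl_insert_lt (vT_nonneg 1) hX1 h1 (by norm_num +decide [val_vT_one])
  have h2X : 2 ∈ X 1 :=
    mem_of_val_compl_insert_lt (vT_nonneg 1) hX1 h1 (by norm_num +decide [val_vT_one])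
  have h3X : 3 ∈ X 1 :=
    mem_of_val_compl_insert_lt (vT_nonneg 1) hX1 h1 (by norm_num +decide [val_vT_one])
  have hX0 : Disjoint (X 0) {0, 2, 3, 4, 6} :=
    disjoint_of_subset_union (j := 1) (k := 2) hX (by decide) (by decide)
      (by simp [insert_subset_iff, *])
  have hlt : val (vT 0) {0, 2, 3, 4, 6}ᶜ < val (vT 0) {0, 2} := by
    norm_num +decide [val_vT_zero]
  exact not_efx_of_val_compl_lt (j := 1) (g := 3) (vT_nonneg 0) (by decide)
    (by simp [insert_subset_iff, *]) hX0 hlt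

lemma not_efx_vT_of_insert_four_six_subset {g : Fin 7} (hg : g ∉ ({4, 6} : Finset (Fin 7)))
    (hgX : insert g {4, 6} ⊆ X 1) : ¬ EFX vT X := by
  have hX2 : Disjoint (X 2) {4, 6} :=
    (hX (by decide)).mono_right ((subset_insert _ _).trans hgX)
  have hlt : val (vT 2) {4, 6}ᶜ < val (vT 2) {4, 6} := by norm_num +decide [val_vT_two]
  exact not_efx_of_val_compl_lt (vT_nonneg 2) hg hgX hX2 hlt

lemma two_mem_of_five_mem (h0 : 16 ≤ val (vT 0) (X 0)) (h5X : 5 ∈ X 2) : 2 ∈ X 0 := by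
  have hX0 : Disjoint (X 0) {5} :=
    (hX (by decide)).mono_right (singleton_subset_iff.2 h5X)
  exact mem_of_val_compl_insert_lt (vT_nonneg 0) hX0 h0 (by norm_num +decide [val_vT_zero])

lemma four_mem_of_two_mem_of_five_mem (h1 : 15 ≤ val (vT 1) (X 1)) (h2X : 2 ∈ X 0)
    (h5X : 5 ∈ X 2) : 4 ∈ X 1 := by
  have hX1 : Disjoint (X 1) {2, 5} :=
    disjoint_of_subset_union (j := 0) (k := 2) hX (by decide) (by decide)
      (by simp [insert_subset_iff, *])
  exact mem_of_val_compl_insert_lt (vT_nonneg 1) hX1 h1 (by norm_num +decide [val_vT_one])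

lemma not_efx_vT_of_zero_mem (h0 : 16 ≤ val (vT 0) (X 0)) (h1 : 15 ≤ val (vT 1) (X 1))
    (h5X : 5 ∈ X 2) (h0X : 0 ∈ X 0) : ¬ EFX vT X := by
  have h2X : 2 ∈ X 0 := two_mem_of_five_mem hX h0 h5X
  have h4X : 4 ∈ X 1 := four_mem_of_two_mem_of_five_mem hX h1 h2X h5X
  have hX1 : Disjoint (X 1) {0, 2, 5} :=
    disjoint_of_subset_union (j := 0) (k := 2) hX (by decide) (by decide)
      (by simp [insert_subset_iff, *])
  have h3X : 3 ∈ X 1 :=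
    mem_of_val_compl_insert_lt (vT_nonneg 1) hX1 h1 (by norm_num +decide [val_vT_one])
  have h6X : 6 ∈ X 1 :=
    mem_of_val_compl_insert_lt (vT_nonneg 1) hX1 h1 (by norm_num +decide [val_vT_one])
  exact not_efx_vT_of_insert_four_six_subset (g := 3) hX (by decide)
    (by simp [insert_subset_iff, *])

lemma XT_subset_of_zero_notMem (h0 : 16 ≤ val (vT 0) (X 0)) (h1 : 15 ≤ val (vT 1) (X 1))
    (h5X : 5 ∈ X 2) (h0X : 0 ∉ X 0) (i : Fin 3) : XT i ⊆ X i := by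
  have h2X : 2 ∈ X 0 := two_mem_of_five_mem hX h0 h5X
  have h4X : 4 ∈ X 1 := four_mem_of_two_mem_of_five_mem hX h1 h2X h5X
  have h5X0 : 5 ∉ X 0 := disjoint_left.1 (hX (by decide)) h5X
  have hX0 : Disjoint (X 0) {0, 5} := by simp [h0X, h5X0]
  have h1X : 1 ∈ X 0 :=
    mem_of_val_compl_insert_lt (vT_nonneg 0) hX0 h0 (by norm_num +decide [val_vT_zero])
  have h3X : 3 ∈ X 0 :=
    mem_of_val_compl_insert_lt (vT_nonneg 0) hX0 h0 (by norm_num +decide [val_vT_zero])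
  have hX1 : Disjoint (X 1) {2, 3, 5} :=
    disjoint_of_subset_union (j := 0) (k := 2) hX (by decide) (by decide)
      (by simp [insert_subset_iff, *])
  have h0X1 : 0 ∈ X 1 :=
    mem_of_val_compl_insert_lt (vT_nonneg 1) hX1 h1 (by norm_num +decide [val_vT_one])
  fin_cases i <;> simp [XT, insert_subset_iff, *]

lemma not_efx_vT_of_XT_subset (hXT : ∀ i, XT i ⊆ X i) {i : Fin 3} (h6X : 6 ∈ X i) :
    ¬ EFX vT X := by
  have hX0 : {1, 2, 3} ⊆ X 0 := hXT 0
  have hX1 : {0, 4} ⊆ X 1 := hXT 1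
  have hX2 : {5} ⊆ X 2 := hXT 2
  obtain rfl | rfl | rfl : i = 0 ∨ i = 1 ∨ i = 2 := by omega
  · have hT : Disjoint (X 1) {1, 2, 3, 5, 6} :=
      disjoint_of_subset_union (j := 0) (k := 2) hX (by decide) (by decide) (by grind)
    have hlt : val (vT 1) {1, 2, 3, 5, 6}ᶜ < val (vT 1) {2, 3, 6} := by
      norm_num +decide [val_vT_one]
    exact not_efx_of_val_compl_lt (j := 0) (g := 1) (vT_nonneg 1) (by decide) (by grind) hT hlt
  · exact not_efx_vT_of_insert_four_six_subset (g := 0) hX (by decide) (by grind)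
  · have hT : Disjoint (X 0) {0, 4, 5, 6} :=
      disjoint_of_subset_union (j := 1) (k := 2) hX (by decide) (by decide) (by grind)
    have hlt : val (vT 0) {0, 4, 5, 6}ᶜ < val (vT 0) {5} := by norm_num +decide [val_vT_zero]
    exact not_efx_of_val_compl_lt (j := 2) (g := 6) (vT_nonneg 0) (by decide) (by grind) hT hlt

end Table1

theorem table1_no_dominating_complete_efx_general :
    EFX vT XT ∧
    ¬ ∃ X : Fin 3 → Finset (Fin 7),
        Pairwise (Function.onFun Disjoint X) ∧ (∃ i, 6 ∈ X i) ∧ EFX vT X ∧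
        ∀ i, val (vT i) (XT i) ≤ val (vT i) (X i) := by
  refine ⟨Table1.efx_XT, ?_⟩
  rintro ⟨X, hX, ⟨i, h6X⟩, hefx, hge⟩
  obtain ⟨h0, h1, h2⟩ := Table1.forall_val_XT_le_iff.1 hge
  by_cases h5X : 5 ∈ X 2
  · by_cases h0X : 0 ∈ X 0
    · exact Table1.not_efx_vT_of_zero_mem hX h0 h1 h5X h0X hefx
    · have hXT : ∀ i, XT i ⊆ X i :=
        Table1.XT_subset_of_zero_notMem hX h0 h1 h5X h0X
      exact Table1.not_efx_vT_of_XT_subset hX hXT h6X hefx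
  · exact Table1.not_efx_vT_of_five_notMem hX h1 h2 h5X hefx

/-- In the Table-1 instance, the partial allocation `XT` is EFX, no complete EFX allocation
gives the three agents at least `16`, `15` and `10` respectively, and in particular no
complete EFX allocation Pareto dominates `XT`. -/
theorem table1_no_dominating_complete_efx :
    EFX vT XT ∧
    (¬ ∃ X' : Fin 3 → Finset (Fin 7),
        (∀ i j, i ≠ j → Disjoint (X' i) (X' j)) ∧
        X' 0 ∪ X' 1 ∪ X' 2 = Finset.univ ∧
        EFX vT X' ∧
        16 ≤ val (vT 0) (X' 0) ∧ 15 ≤ val (vT 1) (X' 1) ∧ 10 ≤ val (vT 2) (X' 2)) ∧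
    (¬ ∃ X' : Fin 3 → Finset (Fin 7),
        (∀ i j, i ≠ j → Disjoint (X' i) (X' j)) ∧
        X' 0 ∪ X' 1 ∪ X' 2 = Finset.univ ∧
        EFX vT X' ∧
        (∀ i, val (vT i) (XT i) ≤ val (vT i) (X' i)) ∧
        (∃ i, val (vT i) (XT i) < val (vT i) (X' i))) := by
  obtain ⟨hXT, hnot⟩ := table1_no_dominating_complete_efx_general
  refine ⟨hXT, ?_, ?_⟩
  · rintro ⟨X, hdisj, hcover, hefx, hge⟩
    exact hnot ⟨X, hdisj, exists_mem_of_union_eq_univ hcover 6, hefx,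
      Table1.forall_val_XT_le_iff.2 hge⟩
  · rintro ⟨X, hdisj, hcover, hefx, hge, -⟩
    exact hnot ⟨X, hdisj, exists_mem_of_union_eq_univ hcover 6, hefx, hge⟩
end

section
/- There exists ε₀ > 0 such that for every ε with 0 < ε < ε₀ the following holds in the ε-instance: the partial allocation X with X_1 = {g_2, g_3, g_4}, X_2 = {g_1, g_5}, X_3 = {g_6} (the good g_7 is unallocated) is EFX, and every complete EFX allocation X' = (X'_1, X'_2, X'_3) satisfies v_1(X'_1)·v_2(X'_2)·v_3(X'_3) < v_1(X_1)·v_2(X_2)·v_3(X_3) = (10 + 2ε^5)·(10 + ε)·10. In particular, the Nash welfare of this partial EFX allocation is strictly larger than the Nash welfare of every complete EFX allocation. -/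
open Finset

/-- The valuations of the ε-instance: agent `i`'s value for good `g_{k+1}` is `vE ε i k`. -/
noncomputable def vE (ε : ℝ) : Fin 3 → Fin 7 → ℝ :=
  ![![ε ^ 3 + 6 * ε ^ 5, 2 * ε ^ 5, 10 - ε ^ 3, ε ^ 3, 10 - 2 * ε ^ 3,
      10 + 3 * ε ^ 5, ε ^ 5],
    ![ε, 0, 10 - ε ^ 2 + ε ^ 6, 2 * ε ^ 2, 10, 0, ε - ε ^ 2],
    ![0, 0, 0, 0, 10 - ε ^ 4, 10, 2 * ε ^ 4]]

/-!
Suppose a complete EFX allocation reaches the target `1000 + 100 ε + ⋯`. With goods and agents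
indexed from `0`, every agent must then hold a good that it values at about `10`. Only the goods
`2`, `4`, `5` qualify, and they can be assigned in three ways. Within each, either agent `1` gets
neither good `0` nor good `6`, and so too little value beyond `10`, or EFX pins down where some of
the remaining goods go: if agent `i` prefers a part `T` of the bundle `X j` to its own bundle, then
EFX forces `X j = T`. The perturbations of order `ε ^ 3` to `ε ^ 6` are tuned to make these
preferences strict, and what EFX still allows stays below the target.
-/

section General

variable {ι G : Type*} {v : ι → G → ℝ} {X Y : ι → Finset G}

/-- The product of the agents' values for their own bundles, i.e. the Nash welfare without the
root, which does not affect comparisons. -/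
noncomputable def nashProduct [Fintype ι] (v : ι → G → ℝ) (X : ι → Finset G) : ℝ :=
  ∏ i, val (v i) (X i)

theorem val_nonneg {u : G → ℝ} (hu : ∀ g, 0 ≤ u g) (S : Finset G) : 0 ≤ val u S :=
  sum_nonneg fun g _ => hu g

theorem val_mono_s16 {u : G → ℝ} (hu : ∀ g, 0 ≤ u g) {S T : Finset G} (hST : S ⊆ T) :
    val u S ≤ val u T :=
  sum_le_sum_of_subset_of_nonneg hST fun g _ _ => hu g

theorem val_sdiff_singleton [DecidableEq G] (u : G → ℝ) {S : Finset G} {g : G} (hg : g ∈ S) :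
    val u (S \ {g}) = val u S - u g := by
  simp only [_root_.val, sum_sdiff_eq_sub (singleton_subset_iff.mpr hg), sum_singleton]

theorem nashProduct_mono [Fintype ι] (hv : ∀ i g, 0 ≤ v i g) (hXY : X ≤ Y) :
    nashProduct v X ≤ nashProduct v Y :=
  prod_le_prod (fun i _ => val_nonneg (hv i) (X i)) fun i _ => val_mono_s16 (hv i) (hXY i)

theorem nashProduct_le_mul_pow [Fintype ι] (hv : ∀ i g, 0 ≤ v i g) {a b : ℝ} {i : ι}
    (ha : val (v i) (X i) ≤ a) (hb : ∀ j, val (v j) (X j) ≤ b) :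
    nashProduct v X ≤ a * b ^ (Fintype.card ι - 1) := by
  classical
  have hval (j : ι) : 0 ≤ val (v j) (X j) := val_nonneg (hv j) (X j)
  calc nashProduct v X
      = val (v i) (X i) * ∏ j ∈ univ.erase i, val (v j) (X j) :=
        (mul_prod_erase univ _ (mem_univ i)).symm
    _ ≤ a * ∏ _j ∈ univ.erase i, b :=
        mul_le_mul ha (prod_le_prod (fun j _ => hval j) fun j _ => hb j)
          (prod_nonneg fun j _ => hval j) ((hval i).trans ha)
    _ = a * b ^ (Fintype.card ι - 1) := by
        rw [prod_const, card_erase_of_mem (mem_univ i), card_univ]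

end General

section Allocations

variable {ι G : Type*} [DecidableEq ι] [Fintype G]

/-- The complete allocation in which agent `owner g` receives the good `g`. -/
def allocationOf (owner : G → ι) (i : ι) : Finset G := {g | owner g = i}

theorem mem_allocationOf {owner : G → ι} {i : ι} {g : G} :
    g ∈ allocationOf owner i ↔ owner g = i := by
  simp only [allocationOf, mem_filter_univ]

theorem allocationOf_subset_iff {owner : G → ι} {i : ι} {U : Finset G} :
    allocationOf owner i ⊆ U ↔ ∀ g, owner g = i → g ∈ U := by
  simp only [subset_iff, mem_allocationOf]

theorem allocationOf_le_iff {owner : G → ι} {U : ι → Finset G} :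
    allocationOf owner ≤ U ↔ ∀ i g, owner g = i → g ∈ U i :=
  forall_congr' fun _ => allocationOf_subset_iff

theorem exists_eq_allocationOf {X : ι → Finset G} (hdisj : ∀ i j, i ≠ j → Disjoint (X i) (X j))
    (hcover : ∀ g, ∃ i, g ∈ X i) : ∃ owner, X = allocationOf owner := by
  choose owner howner using hcover
  refine ⟨owner, funext fun i => ext fun g => ?_⟩
  rw [mem_allocationOf]
  constructor
  · intro hg
    by_contra hne
    exact disjoint_left.mp (hdisj _ _ hne) (howner g) hg
  · rintro rfl
    exact howner g

end Allocations

theorem EFX.subset_of_val_lt {G : Type*} [DecidableEq G] {v : Fin 3 → G → ℝ}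
    {X : Fin 3 → Finset G} (hX : EFX v X) (hv : ∀ i g, 0 ≤ v i g) {i j : Fin 3} {S T : Finset G}
    (hS : X i ⊆ S) (hT : T ⊆ X j) (hlt : val (v i) S < val (v i) T) : X j ⊆ T := by
  intro g hg
  by_contra hgT
  have hTg : T ⊆ X j \ {g} := subset_sdiff.mpr ⟨hT, disjoint_singleton_right.mpr hgT⟩
  have henvy : val (v i) T ≤ val (v i) S := calc
    val (v i) T ≤ val (v i) (X j \ {g}) := val_mono_s16 (hv i) hTg
    _ ≤ val (v i) (X i) := hX i j g hg
    _ ≤ val (v i) S := val_mono_s16 (hv i) hS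
  exact henvy.not_gt hlt

theorem EFX.mem_of_val_lt {G : Type*} [DecidableEq G] [Fintype G] {v : Fin 3 → G → ℝ}
    {owner : G → Fin 3} (hX : EFX v (allocationOf owner)) (hv : ∀ i g, 0 ≤ v i g) {i j : Fin 3}
    {S T : Finset G} (hS : ∀ g, owner g = i → g ∈ S) (hT : ∀ g ∈ T, owner g = j)
    (hlt : val (v i) S < val (v i) T) (g : G) (hg : owner g = j) : g ∈ T :=
  hX.subset_of_val_lt hv (allocationOf_subset_iff.mpr hS)
    (fun h hh => mem_allocationOf.mpr (hT h hh)) hlt (mem_allocationOf.mpr hg)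

section EpsInstance

variable {ε : ℝ}

theorem pow_mul_self_le_div_ten (hε : 0 ≤ ε) (hε' : ε ≤ 1 / 10) (n : ℕ) :
    ε ^ n * ε ≤ ε ^ n / 10 := by
  linarith [mul_le_mul_of_nonneg_left hε' (pow_nonneg hε n)]

theorem vE_nonneg (hε : 0 < ε) (hε' : ε ≤ 1 / 10) (i : Fin 3) (g : Fin 7) : 0 ≤ vE ε i g := by
  have hpos := pow_pos hε
  have hdecay := pow_mul_self_le_div_ten hε.le hε'
  fin_cases i <;> fin_cases g <;> simp [vE] <;>
    linarith [hpos 2, hpos 3, hpos 4, hpos 5, hpos 6, hdecay 1, hdecay 2, hdecay 3]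

theorem nashProduct_XT (ε : ℝ) :
    nashProduct (vE ε) XT = (10 + 2 * ε ^ 5) * (10 + ε) * 10 := by
  simp [nashProduct, Fin.prod_univ_three, _root_.val, vE, XT]
  ring

theorem efx_XT (hε : 0 < ε) (hε' : ε ≤ 1 / 10) : EFX (vE ε) XT := by
  have hpos := pow_pos hε
  have hdecay := pow_mul_self_le_div_ten hε.le hε'
  intro i j g hg
  rw [val_sdiff_singleton _ hg]
  fin_cases i <;> fin_cases j <;> fin_cases hg <;>
    simp [_root_.val, vE, XT] <;>
    linarith [hpos 2, hpos 3, hpos 4, hpos 5, hpos 6, hdecay 1, hdecay 2, hdecay 3, hdecay 4,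
      hdecay 5]

/-- The goods that agent `i` of the ε-instance values below `1`. -/
def smallGoods : Fin 3 → Finset (Fin 7) :=
  ![{0, 1, 3, 6}, {0, 1, 3, 5, 6}, {0, 1, 2, 3, 6}]

theorem val_smallGoods_le_one (hε : 0 < ε) (hε' : ε ≤ 1 / 10) (i : Fin 3) :
    val (vE ε i) (smallGoods i) ≤ 1 := by
  have hpos := pow_pos hε
  have hdecay := pow_mul_self_le_div_ten hε.le hε'
  fin_cases i <;> simp [_root_.val, vE, smallGoods] <;>
    linarith [hpos 2, hpos 5, hdecay 1, hdecay 2, hdecay 3, hdecay 4]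

theorem val_univ_le (hε : 0 < ε) (hε' : ε ≤ 1 / 10) (i : Fin 3) : val (vE ε i) univ ≤ 31 := by
  have hpos := pow_pos hε
  have hdecay := pow_mul_self_le_div_ten hε.le hε'
  fin_cases i <;> simp [_root_.val, vE, Fin.sum_univ_seven] <;>
    linarith [hpos 3, hpos 6, hdecay 1, hdecay 2, hdecay 3, hdecay 4, hdecay 5]

theorem not_subset_smallGoods (hε : 0 < ε) (hε' : ε ≤ 1 / 10) {X : Fin 3 → Finset (Fin 7)}
    (hX : 1000 ≤ nashProduct (vE ε) X) (i : Fin 3) : ¬X i ⊆ smallGoods i := by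
  intro hsmall
  have hv := vE_nonneg hε hε'
  have hle := nashProduct_le_mul_pow hv
    ((val_mono_s16 (hv i) hsmall).trans (val_smallGoods_le_one hε hε' i))
    fun j => (val_mono_s16 (hv j) (subset_univ (X j))).trans (val_univ_le hε hε' j)
  norm_num at hle
  linarith

variable {owner : Fin 7 → Fin 3}

theorem owner_large_goods (hε : 0 < ε) (hε' : ε ≤ 1 / 10)
    (hnash : 1000 ≤ nashProduct (vE ε) (allocationOf owner)) :
    (owner 2 = 0 ∧ owner 4 = 1 ∧ owner 5 = 2) ∨ (owner 2 = 1 ∧ owner 4 = 2 ∧ owner 5 = 0) ∨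
      (owner 2 = 1 ∧ owner 4 = 0 ∧ owner 5 = 2) := by
  have hlarge := not_subset_smallGoods hε hε' hnash
  simp only [allocationOf_subset_iff] at hlarge
  have h0 : owner 2 = 0 ∨ owner 4 = 0 ∨ owner 5 = 0 := by
    simpa [smallGoods, Fin.exists_fin_succ] using hlarge 0
  have h1 : owner 2 = 1 ∨ owner 4 = 1 := by
    simpa [smallGoods, Fin.exists_fin_succ] using hlarge 1
  have h2 : owner 4 = 2 ∨ owner 5 = 2 := by
    simpa [smallGoods, Fin.exists_fin_succ] using hlarge 2
  lia

theorem EFX.allocationOf_le_of_owner_012_of_owner_zero (hε : 0 < ε) (hε' : ε ≤ 1 / 10)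
    (hX : EFX (vE ε) (allocationOf owner)) (h2 : owner 2 = 0) (h4 : owner 4 = 1) (h5 : owner 5 = 2)
    (h0 : owner 0 = 1) (h6 : owner 6 ≠ 1) :
    allocationOf owner ≤ ![{2, 3, 6}, {0, 1, 4}, {0, 1, 3, 5}] ∨
    allocationOf owner ≤ ![{1, 2, 6}, {0, 1, 4}, {0, 1, 3, 5}] := by
  have hv := vE_nonneg hε hε'
  have hpos := pow_pos hε
  have h62 : owner 6 ≠ 2 := by
    intro h62
    have hlt : val (vE ε 0) {1, 2, 3} < val (vE ε 0) {5} := by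
      suffices 2 * ε ^ 5 + (10 - ε ^ 3 + ε ^ 3) < 10 + 3 * ε ^ 5 by
        simpa [_root_.val, vE] using this
      linarith [hpos 5]
    have hbundle := hX.mem_of_val_lt hv (j := 2) (by simp [Fin.forall_fin_succ, h0, h4, h5, h62])
      (by simp [h5]) hlt
    simpa using hbundle 6 h62
  have h60 : owner 6 = 0 := by lia
  have h31 : owner 3 ≠ 1 := by
    intro h31
    have hlt : val (vE ε 0) {1, 2, 6} < val (vE ε 0) {0, 4} := by
      suffices 2 * ε ^ 5 + (10 - ε ^ 3 + ε ^ 5) < ε ^ 3 + 6 * ε ^ 5 + (10 - 2 * ε ^ 3) by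
        simpa [_root_.val, vE] using this
      linarith [hpos 5]
    have hbundle := hX.mem_of_val_lt hv (j := 1) (by simp [Fin.forall_fin_succ, h0, h31, h4, h5])
      (by simp [h0, h4]) hlt
    simpa using hbundle 3 h31
  rw [allocationOf_le_iff, allocationOf_le_iff]
  by_cases h3 : owner 3 = 0
  · have h1 : owner 1 ≠ 0 := by
      intro h1
      have hlt : val (vE ε 1) {0, 1, 4} < val (vE ε 1) {2, 3, 6} := by
        suffices ε + 10 < 10 - ε ^ 2 + ε ^ 6 + (2 * ε ^ 2 + (ε - ε ^ 2)) by
          simpa [_root_.val, vE] using this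
        linarith [hpos 6]
      have hbundle := hX.mem_of_val_lt hv (j := 0)
        (by simp [Fin.forall_fin_succ, h2, h3, h5, h60]) (by simp [h2, h3, h60]) hlt
      simpa using hbundle 1 h1
    left
    simp [Fin.forall_fin_succ, h0, h1, h2, h3, h4, h5, h60]
  · right
    simp [Fin.forall_fin_succ, h0, h2, h3, h31, h4, h5, h60]

theorem EFX.allocationOf_le_of_owner_012 (hε : 0 < ε) (hε' : ε ≤ 1 / 10)
    (hX : EFX (vE ε) (allocationOf owner))
    (h2 : owner 2 = 0) (h4 : owner 4 = 1) (h5 : owner 5 = 2) :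
    allocationOf owner ≤ ![{0, 1, 2, 3, 6}, {1, 3, 4}, {0, 1, 3, 5, 6}] ∨
    allocationOf owner ≤ ![{0, 1, 2, 3}, {4, 6}, {0, 1, 3, 5}] ∨
    allocationOf owner ≤ ![{2, 3, 6}, {0, 1, 4}, {0, 1, 3, 5}] ∨
    allocationOf owner ≤ ![{1, 2, 6}, {0, 1, 4}, {0, 1, 3, 5}] := by
  by_cases h6 : owner 6 = 1
  · have hlt : val (vE ε 2) {0, 1, 3, 5} < val (vE ε 2) {4, 6} := by
      suffices 10 < 10 - ε ^ 4 + 2 * ε ^ 4 by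
        simpa [_root_.val, vE] using this
      linarith [pow_pos hε 4]
    have hbundle := hX.mem_of_val_lt (vE_nonneg hε hε') (j := 1)
      (by simp [Fin.forall_fin_succ, h2, h4, h6]) (by simp [h4, h6]) hlt
    obtain ⟨h0, h1, h3⟩ : owner 0 ≠ 1 ∧ owner 1 ≠ 1 ∧ owner 3 ≠ 1 := by
      simpa [Fin.forall_fin_succ, h2, h5] using hbundle
    right; left
    simp [allocationOf_le_iff, Fin.forall_fin_succ, h0, h1, h2, h3, h4, h5, h6]
  by_cases h0 : owner 0 = 1
  · right; right
    exact hX.allocationOf_le_of_owner_012_of_owner_zero hε hε' h2 h4 h5 h0 h6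
  · left
    simp [allocationOf_le_iff, Fin.forall_fin_succ, h2, h4, h5, h0, h6]

theorem EFX.allocationOf_le_of_owner_120 (hε : 0 < ε) (hε' : ε ≤ 1 / 10)
    (hX : EFX (vE ε) (allocationOf owner))
    (h2 : owner 2 = 1) (h4 : owner 4 = 2) (h5 : owner 5 = 0) :
    allocationOf owner ≤ ![{0, 1, 3, 5, 6}, {1, 2, 3}, {0, 1, 3, 4, 6}] ∨
    allocationOf owner ≤ ![{1, 3, 5}, {0, 1, 2}, {1, 3, 4, 6}] ∨
    allocationOf owner ≤ ![{5}, {1, 2, 3, 6}, {0, 1, 3, 4}] := by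
  have hv := vE_nonneg hε hε'
  have hpos := pow_pos hε
  have hlt : val (vE ε 0) {1, 5} < val (vE ε 0) {0, 2} := by
    suffices 2 * ε ^ 5 + (10 + 3 * ε ^ 5) < ε ^ 3 + 6 * ε ^ 5 + (10 - ε ^ 3) by
      simpa [_root_.val, vE] using this
    linarith [hpos 5]
  simp only [allocationOf_le_iff]
  by_cases h6 : owner 6 = 2
  · by_cases h0 : owner 0 = 1
    · have h3 : owner 3 ≠ 1 := by
        intro h3
        have hbundle := hX.mem_of_val_lt hv (j := 1)
          (by simp [Fin.forall_fin_succ, h0, h2, h3, h4, h6]) (by simp [h0, h2]) hlt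
        simpa using hbundle 3 h3
      right; left
      simp [Fin.forall_fin_succ, h0, h2, h3, h4, h5, h6]
    · left
      simp [Fin.forall_fin_succ, h0, h2, h4, h5, h6]
  · have hlt' : val (vE ε 2) {0, 1, 3, 4} < val (vE ε 2) {5} := by
      suffices 10 - ε ^ 4 < 10 by
        simpa [_root_.val, vE] using this
      linarith [hpos 4]
    have hbundle := hX.mem_of_val_lt hv (j := 0) (by simp [Fin.forall_fin_succ, h2, h5, h6])
      (by simp [h5]) hlt'
    obtain ⟨h00, h10, h30, h60⟩ : owner 0 ≠ 0 ∧ owner 1 ≠ 0 ∧ owner 3 ≠ 0 ∧ owner 6 ≠ 0 := by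
      simpa [Fin.forall_fin_succ, h2, h4] using hbundle
    have h61 : owner 6 = 1 := by lia
    have h0 : owner 0 ≠ 1 := by
      intro h0
      have hbundle' := hX.mem_of_val_lt hv (j := 1)
        (by simp [Fin.forall_fin_succ, h10, h2, h30, h4, h61, h0]) (by simp [h0, h2]) hlt
      simpa using hbundle' 6 h61
    right; right
    simp [Fin.forall_fin_succ, h00, h0, h10, h2, h30, h4, h5, h61]

theorem EFX.allocationOf_le_of_owner_102 (hε : 0 < ε) (hε' : ε ≤ 1 / 10)
    (hX : EFX (vE ε) (allocationOf owner))
    (h2 : owner 2 = 1) (h4 : owner 4 = 0) (h5 : owner 5 = 2) :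
    allocationOf owner ≤ ![{1, 3, 4, 6}, {0, 2}, {1, 3, 5, 6}] ∨
    allocationOf owner ≤ ![{0, 1, 3, 4, 6}, {1, 2, 3}, {0, 1, 3, 5, 6}] ∨
    allocationOf owner ≤ ![{0, 1, 4}, {1, 2, 3, 6}, {0, 1, 5}] ∨
    allocationOf owner ≤ ![{0, 1, 3, 4}, {1, 2, 6}, {0, 1, 3, 5}] := by
  simp only [allocationOf_le_iff]
  by_cases h0 : owner 0 = 1
  · have hlt : val (vE ε 0) {1, 3, 4, 6} < val (vE ε 0) {0, 2} := by
      suffices 2 * ε ^ 5 + (ε ^ 3 + (10 - 2 * ε ^ 3 + ε ^ 5)) < ε ^ 3 + 6 * ε ^ 5 + (10 - ε ^ 3) by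
        simpa [_root_.val, vE] using this
      linarith [pow_pos hε 3, pow_pos hε 5]
    have hbundle := hX.mem_of_val_lt (vE_nonneg hε hε') (j := 1)
      (by simp [Fin.forall_fin_succ, h0, h2, h5]) (by simp [h0, h2]) hlt
    obtain ⟨h1, h3, h6⟩ : owner 1 ≠ 1 ∧ owner 3 ≠ 1 ∧ owner 6 ≠ 1 := by
      simpa [Fin.forall_fin_succ, h4, h5] using hbundle
    left
    simp [Fin.forall_fin_succ, h0, h1, h2, h3, h4, h5, h6]
  by_cases h6 : owner 6 = 1
  · by_cases h3 : owner 3 = 1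
    · right; right; left
      simp [Fin.forall_fin_succ, h0, h2, h3, h4, h5, h6]
    · right; right; right
      simp [Fin.forall_fin_succ, h0, h2, h3, h4, h5, h6]
  · right; left
    simp [Fin.forall_fin_succ, h0, h2, h4, h5, h6]

theorem EFX.nashProduct_allocationOf_lt (hε : 0 < ε) (hε' : ε ≤ 1 / 10)
    (hX : EFX (vE ε) (allocationOf owner)) :
    nashProduct (vE ε) (allocationOf owner) < nashProduct (vE ε) XT := by
  have hpos := pow_pos hε
  have hdecay := pow_mul_self_le_div_ten hε.le hε'
  have hXT : 1000 ≤ nashProduct (vE ε) XT := by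
    rw [nashProduct_XT]
    linarith [hpos 5, hpos 6]
  by_contra! hle
  refine hle.not_gt ?_
  have hdominated := (owner_large_goods hε hε' (hXT.trans hle)).imp3
    (fun ⟨h2, h4, h5⟩ => hX.allocationOf_le_of_owner_012 hε hε' h2 h4 h5)
    (fun ⟨h2, h4, h5⟩ => hX.allocationOf_le_of_owner_120 hε hε' h2 h4 h5)
    (fun ⟨h2, h4, h5⟩ => hX.allocationOf_le_of_owner_102 hε hε' h2 h4 h5)
  -- Each difference is a polynomial whose lowest-order term wins at `ε ≤ 1 / 10`.
  rcases hdominated with (hU | hU | hU | hU) | (hU | hU | hU) | (hU | hU | hU | hU) <;>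
    refine (nashProduct_mono (vE_nonneg hε hε') hU).trans_lt ?_ <;>
    simp [nashProduct, Fin.prod_univ_three, _root_.val, vE, XT] <;>
    linarith [hpos 15, hdecay 1, hdecay 2, hdecay 3, hdecay 4, hdecay 5, hdecay 6, hdecay 7,
      hdecay 8, hdecay 9, hdecay 10, hdecay 11, hdecay 12, hdecay 13, hdecay 14]

end EpsInstance

/-- For all sufficiently small `ε > 0`, in the ε-instance the partial allocation `XT`
is EFX, its Nash-welfare product equals `(10 + 2ε⁵)(10 + ε)·10`, and every complete EFX
allocation has a strictly smaller Nash-welfare product. -/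
theorem eps_instance_partial_beats_all_complete :
    ∃ ε₀ : ℝ, 0 < ε₀ ∧ ∀ ε : ℝ, 0 < ε → ε < ε₀ →
      EFX (vE ε) XT ∧
      val (vE ε 0) (XT 0) * val (vE ε 1) (XT 1) * val (vE ε 2) (XT 2)
        = (10 + 2 * ε ^ 5) * (10 + ε) * 10 ∧
      ∀ X' : Fin 3 → Finset (Fin 7),
        (∀ i j, i ≠ j → Disjoint (X' i) (X' j)) →
        X' 0 ∪ X' 1 ∪ X' 2 = Finset.univ →
        EFX (vE ε) X' →
        val (vE ε 0) (X' 0) * val (vE ε 1) (X' 1) * val (vE ε 2) (X' 2)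
          < (10 + 2 * ε ^ 5) * (10 + ε) * 10 := by
  refine ⟨1 / 10, by norm_num, fun ε hε hε' => ⟨efx_XT hε hε'.le, ?_, ?_⟩⟩
  · simpa only [nashProduct, Fin.prod_univ_three] using nashProduct_XT ε
  · intro X' hdisj hcover hX'
    have hmem (g : Fin 7) : ∃ i, g ∈ X' i := by
      have hg : g ∈ X' 0 ∪ X' 1 ∪ X' 2 := hcover ▸ mem_univ g
      simpa [Fin.exists_fin_succ, or_assoc] using hg
    obtain ⟨owner, rfl⟩ := exists_eq_allocationOf hdisj hmem
    rw [← nashProduct_XT]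
    simpa only [nashProduct, Fin.prod_univ_three] using hX'.nashProduct_allocationOf_lt hε hε'.le
end
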